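/- Let K be a field and I a nonzero ideal of K[x,y] with reduced minimal lexicographic Gröbner basis G = (g_0,…,g_s) (for x ≺ y) and associated detaching sequence (A_i). Then for every n ≥ n_s, the K[x]-module I_{≤(.,n)} = {f ∈ I : deg_y(f) ≤ n} is a free K[x]-module of rank n − n_s + 1, with basis A_{n_s},…,A_n. -/

import Mathlib

noncomputable section

open Polynomial

/-- Bivariate polynomials `k[x][y]`: the inner `X` is `x`, the outer `X` is `y`. -/
abbrev Biv (k : Type*) [CommRing k] : Type _ := Polynomial (Polynomial k)

variable {k : Type*} [CommRing k]

/-- The leading monomial of `f`, as the pair (y-exponent, x-exponent), for the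
lexicographic order induced by `x ≺ y`. -/
def lmon (f : Biv k) : ℕ × ℕ := (f.natDegree, f.leadingCoeff.natDegree)

/-- Divisibility of monomials: `x^{p.2} y^{p.1}` divides `x^{q.2} y^{q.1}`. -/
def monDvd (p q : ℕ × ℕ) : Prop := p.1 ≤ q.1 ∧ p.2 ≤ q.2

/-- Lexicographic comparison of monomials, `y`-exponent first. -/
def monLt (p q : ℕ × ℕ) : Prop := p.1 < q.1 ∨ (p.1 = q.1 ∧ p.2 < q.2)

/-- The monomial `x^{m.2} y^{m.1}` occurs in `f` (has a nonzero coefficient). -/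
def occursIn (f : Biv k) (m : ℕ × ℕ) : Prop := (f.coeff m.1).coeff m.2 ≠ 0

/-- `G` is a Gröbner basis of `I` for the lexicographic order with `x ≺ y`:
its elements are nonzero elements of `I`, and the leading monomial of any nonzero
element of `I` is divisible by the leading monomial of some element of `G`. -/
def IsGB (G : List (Biv k)) (I : Ideal (Biv k)) : Prop :=
  (∀ g ∈ G, g ≠ 0 ∧ g ∈ I) ∧
  ∀ f ∈ I, f ≠ 0 → ∃ g ∈ G, monDvd (lmon g) (lmon f)

/-- `f` is monic w.r.t. lex `x ≺ y`: the coefficient of its leading monomial is `1`. -/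
def lexMonic (f : Biv k) : Prop := f.leadingCoeff.Monic

/-- `g 0, …, g s` is the reduced minimal lexicographic Gröbner basis of `I`,
listed in decreasing order of leading monomials. -/
def IsReducedGB {s : ℕ} (g : Fin (s + 1) → Biv k) (I : Ideal (Biv k)) : Prop :=
  IsGB (List.ofFn g) I ∧
  (∀ j, lexMonic (g j)) ∧
  (∀ j l, j ≠ l → ∀ m : ℕ × ℕ, occursIn (g j) m → ¬ monDvd (lmon (g l)) m) ∧
  (∀ j l : Fin (s + 1), j < l → monLt (lmon (g l)) (lmon (g j)))

/-- Every monomial of `f` of `y`-degree `< i` is reduced w.r.t. the family `g`. -/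
def reducedBelow {s : ℕ} (g : Fin (s + 1) → Biv k) (i : ℕ) (f : Biv k) : Prop :=
  ∀ m : ℕ × ℕ, m.1 < i → occursIn f m → ∀ j, ¬ monDvd (lmon (g j)) m

/-- `A` is the detaching sequence associated to the reduced Gröbner basis `g` of `I`:
`A i = 0` for `i < n_s`, `A (n_j) = g j`, and otherwise `A i` is obtained from
`y * A (i-1)` by reducing the terms of `y`-degree `< i` modulo `g`
(so `A i - y * A (i-1)` lies in `I` and has `y`-degree `< i`, and the part of `A i`
of `y`-degree `< i` is reduced w.r.t. `g`). -/
def IsDetachingSeq {s : ℕ} (g : Fin (s + 1) → Biv k) (I : Ideal (Biv k))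
    (A : ℕ → Biv k) : Prop :=
  (∀ i, i < (g (Fin.last s)).natDegree → A i = 0) ∧
  (∀ j, A ((g j).natDegree) = g j) ∧
  (∀ i, (g (Fin.last s)).natDegree ≤ i → (∀ j, (g j).natDegree ≠ i) →
    (A i - Polynomial.X * A (i - 1)) ∈ I ∧
    (A i - Polynomial.X * A (i - 1)).degree < (i : WithBot ℕ) ∧
    reducedBelow g i (A i))

/-- The `K[x]`-submodule `I_{≤(.,n)}` of `K[x,y] = K[x][y]` consisting of the elements
of `I` of `y`-degree at most `n`. -/
def ydegLE {K : Type*} [Field K] (I : Ideal (Biv K)) (n : ℕ) :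
    Submodule (Polynomial K) (Biv K) where
  carrier := {f | f ∈ I ∧ f.natDegree ≤ n}
  add_mem' := by
    rintro f g ⟨hfI, hfd⟩ ⟨hgI, hgd⟩
    exact ⟨I.add_mem hfI hgI, le_trans (Polynomial.natDegree_add_le f g) (max_le hfd hgd)⟩
  zero_mem' := ⟨I.zero_mem, by simp⟩
  smul_mem' := by
    rintro c f ⟨hfI, hfd⟩
    rw [Set.mem_setOf_eq, Polynomial.smul_eq_C_mul]
    refine ⟨I.mul_mem_left _ hfI, le_trans Polynomial.natDegree_mul_le ?_⟩
    simpa using hfd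

/-! For each `i ≥ n_s`, the leading coefficients of the elements of `I` of `y`-degree at most `i`
form an ideal of `K[x]`, generated by any nonzero member of least degree. That least degree is
attained by the leading coefficient of `A i`: by minimality, leading coefficients in the Gröbner
basis drop in degree as the `y`-degree grows, and `A i` inherits the leading coefficient of the
`g_j` of largest `y`-degree `n_j ≤ i`. Hence every element of `I` can be cleared degree by degree
with `K[x]`-multiples of the `A i`, which are independent since their `y`-degrees are distinct. -/

section LeadingCoeff

variable {R ι : Type*}

theorem degree_X_mul_of_degree_eq [Semiring R] {p : R[X]} {n : ℕ} (hp : p.degree = n) :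
    (X * p).degree = ((n + 1 : ℕ) : WithBot ℕ) := by
  have hp0 : p ≠ 0 := degree_ne_bot.1 (hp ▸ WithBot.natCast_ne_bot n)
  have := Nontrivial.of_polynomial_ne hp0
  rw [X_mul, degree_mul_X, hp, Nat.cast_add, Nat.cast_one]

theorem linearIndependent_of_natDegree_injective [Ring R] [NoZeroDivisors R] {v : ι → R[X]}
    (hv : ∀ i, v i ≠ 0) (hinj : Function.Injective fun i => (v i).natDegree) :
    LinearIndependent R v := by
  refine linearIndependent_iff'.2 fun t c hsum i hi => ?_
  have hdeg (j : ι) (hj : c j • v j ≠ 0) : (c j • v j).natDegree = (v j).natDegree := by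
    rw [smul_eq_C_mul] at hj ⊢
    exact natDegree_C_mul (C_ne_zero.1 (left_ne_zero_of_mul hj))
  have hdisjoint : Set.Pairwise {j | j ∈ t ∧ c j • v j ≠ 0}
      (Function.onFun Ne (degree ∘ fun j => c j • v j)) := by
    rintro j ⟨-, hj⟩ l ⟨-, hl⟩ hjl heq
    exact hjl (hinj ((hdeg j hj).symm.trans ((natDegree_eq_of_degree_eq heq).trans (hdeg l hl))))
  have hsup := degree_sum_eq_of_disjoint _ t hdisjoint
  rw [hsum, degree_zero, eq_comm, Finset.sup_eq_bot_iff] at hsup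
  have hzero : C (c i) * v i = 0 := by
    rw [← smul_eq_C_mul]
    exact degree_eq_bot.1 (hsup i hi)
  exact C_eq_zero.1 ((mul_eq_zero.1 hzero).resolve_right (hv i))

variable [CommRing R]

theorem degree_sub_smul_lt_of_leadingCoeff_eq_mul {f p : R[X]} {q : R} (hf : f ≠ 0)
    (hdeg : p.natDegree = f.natDegree) (hq : f.leadingCoeff = p.leadingCoeff * q) :
    (f - q • p).degree < f.degree := by
  have hcoeff : (C q).leadingCoeff * p.leadingCoeff = f.leadingCoeff := by
    rw [leadingCoeff_C, hq, mul_comm]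
  have hne : (C q).leadingCoeff * p.leadingCoeff ≠ 0 := hcoeff ▸ leadingCoeff_ne_zero.2 hf
  have hp : p ≠ 0 := leadingCoeff_ne_zero.1 (right_ne_zero_of_mul hne)
  have hq0 : q ≠ 0 := by simpa only [leadingCoeff_C] using left_ne_zero_of_mul hne
  rw [smul_eq_C_mul]
  refine degree_sub_lt_left ?_ hf ?_
  · rw [degree_mul' hne, degree_C hq0, zero_add, degree_eq_natDegree hp, hdeg,
      degree_eq_natDegree hf]
  · rw [leadingCoeff_mul' hne, hcoeff]

theorem span_range_eq_of_leadingCoeff_dvd {M : Submodule R R[X]} {v : ι → R[X]}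
    (hv : ∀ i, v i ∈ M)
    (hdvd : ∀ f ∈ M, f ≠ 0 →
      ∃ i, (v i).natDegree = f.natDegree ∧ (v i).leadingCoeff ∣ f.leadingCoeff) :
    Submodule.span R (Set.range v) = M := by
  refine le_antisymm (Submodule.span_le.2 (Set.range_subset_iff.2 hv)) fun f hf => ?_
  induction hd : f.degree using WellFoundedLT.induction generalizing f with
  | ind d ih =>
    subst hd
    rcases eq_or_ne f 0 with rfl | hf0
    · exact Submodule.zero_mem _
    obtain ⟨i, hi, q, hq⟩ := hdvd f hf hf0
    have hrem : f - q • v i ∈ Submodule.span R (Set.range v) :=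
      ih _ (degree_sub_smul_lt_of_leadingCoeff_eq_mul hf0 hi hq) _
        (M.sub_mem hf (M.smul_mem q (hv i))) rfl
    have hlead : q • v i ∈ Submodule.span R (Set.range v) :=
      Submodule.smul_mem _ q (Submodule.subset_span ⟨i, rfl⟩)
    exact (Submodule.sub_mem_iff_left _ hlead).1 hrem

theorem exists_basis_of_leadingCoeff_dvd [NoZeroDivisors R] {M : Submodule R R[X]} {v : ι → R[X]}
    (hv : ∀ i, v i ∈ M) (hv0 : ∀ i, v i ≠ 0)
    (hinj : Function.Injective fun i => (v i).natDegree)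
    (hdvd : ∀ f ∈ M, f ≠ 0 →
      ∃ i, (v i).natDegree = f.natDegree ∧ (v i).leadingCoeff ∣ f.leadingCoeff) :
    ∃ b : Module.Basis ι R M, ∀ i, (b i : R[X]) = v i := by
  obtain rfl := span_range_eq_of_leadingCoeff_dvd hv hdvd
  exact ⟨.span (linearIndependent_of_natDegree_injective hv0 hinj), Module.Basis.coe_span_apply _⟩

end LeadingCoeff

theorem span_singleton_eq_of_natDegree_le {K : Type*} [Field K] {J : Ideal K[X]} {c : K[X]}
    (hc : c ∈ J) (hc0 : c ≠ 0) (hmin : ∀ p ∈ J, p ≠ 0 → c.natDegree ≤ p.natDegree) :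
    Ideal.span {c} = J := by
  refine le_antisymm ((Ideal.span_singleton_le_iff_mem J).2 hc) fun p hp => ?_
  rw [Ideal.mem_span_singleton, ← EuclideanDomain.mod_eq_zero]
  by_contra hmod
  have hlt : (p % c).natDegree < c.natDegree :=
    natDegree_lt_natDegree hmod (EuclideanDomain.mod_lt p hc0)
  exact hlt.not_ge (hmin _ ((mod_mem_iff hc).2 hp) hmod)

/-- The family `g`, in no particular order, is a minimal lexicographic Gröbner basis of `I`:
no leading monomial divides another one, but the elements need neither be monic nor have reduced
tails. -/
structure IsMinimalGB {ι : Type*} (g : ι → Biv k) (I : Ideal (Biv k)) : Prop where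
  ne_zero : ∀ j, g j ≠ 0
  mem : ∀ j, g j ∈ I
  exists_monDvd : ∀ f ∈ I, f ≠ 0 → ∃ j, monDvd (lmon (g j)) (lmon f)
  not_monDvd : ∀ j l, j ≠ l → ¬ monDvd (lmon (g l)) (lmon (g j))

/-- A detaching sequence for the family `g` without the requirement that tails be reduced: from one
index to the next, `A` is either reset to an element of `g` or multiplied by `y` modulo `I`,
up to terms of lower `y`-degree. Its values below the least `y`-degree in `g` are arbitrary. -/
structure IsWeakDetachingSeq {ι : Type*} (g : ι → Biv k) (I : Ideal (Biv k))
    (A : ℕ → Biv k) : Prop where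
  apply_natDegree : ∀ j, A (g j).natDegree = g j
  sub_mem : ∀ i, (∃ j, (g j).natDegree ≤ i) → (∀ j, (g j).natDegree ≠ i + 1) →
    A (i + 1) - X * A i ∈ I
  degree_sub_lt : ∀ i, (∃ j, (g j).natDegree ≤ i) → (∀ j, (g j).natDegree ≠ i + 1) →
    (A (i + 1) - X * A i).degree < ((i + 1 : ℕ) : WithBot ℕ)

namespace IsMinimalGB

variable {ι : Type*} {g : ι → Biv k} {I : Ideal (Biv k)}

theorem exists_natDegree_le (hg : IsMinimalGB g I) {f : Biv k} (hf : f ∈ I) (hf0 : f ≠ 0) :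
    ∃ j, (g j).natDegree ≤ f.natDegree :=
  (hg.exists_monDvd f hf hf0).imp fun _ h => h.1

theorem natDegree_leadingCoeff_le (hg : IsMinimalGB g I) {j l : ι}
    (h : (g j).natDegree ≤ (g l).natDegree) :
    (g l).leadingCoeff.natDegree ≤ (g j).leadingCoeff.natDegree := by
  rcases eq_or_ne l j with rfl | hlj
  · exact le_rfl
  · exact le_of_not_ge fun hle => hg.not_monDvd l j hlj ⟨h, hle⟩

end IsMinimalGB

namespace IsWeakDetachingSeq

section

variable {ι : Type*} {g : ι → Biv k} {I : Ideal (Biv k)} {A : ℕ → Biv k} {i : ℕ}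

theorem induction_on (hA : IsWeakDetachingSeq g I A) {motive : ℕ → Biv k → Prop}
    (reset : ∀ j, motive (g j).natDegree (g j))
    (lift : ∀ i, (∃ j, (g j).natDegree ≤ i) → (∀ j, (g j).natDegree ≠ i + 1) →
      motive i (A i) → motive (i + 1) (A (i + 1)))
    (hi : ∃ j, (g j).natDegree ≤ i) : motive i (A i) := by
  have of_natDegree_eq {i : ℕ} : (∃ l, (g l).natDegree = i) → motive i (A i) := by
    rintro ⟨l, rfl⟩
    rw [hA.apply_natDegree l]
    exact reset l
  induction i with
  | zero => exact of_natDegree_eq (hi.imp fun _ => Nat.eq_zero_of_le_zero)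
  | succ i ih =>
    by_cases hgap : ∀ l, (g l).natDegree ≠ i + 1
    · have hi' : ∃ j, (g j).natDegree ≤ i :=
        hi.imp fun j hj => Nat.le_of_lt_succ (hj.lt_of_ne (hgap j))
      exact lift i hi' hgap (ih hi')
    · push Not at hgap
      exact of_natDegree_eq hgap

theorem mem (hg : IsMinimalGB g I) (hA : IsWeakDetachingSeq g I A)
    (hi : ∃ j, (g j).natDegree ≤ i) : A i ∈ I :=
  hA.induction_on (motive := fun _ a => a ∈ I) hg.mem
    (fun i hi hgap ih => (I.sub_mem_iff_left (I.mul_mem_left X ih)).1 (hA.sub_mem i hi hgap)) hi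

theorem degree_sub_lt_degree_X_mul (hA : IsWeakDetachingSeq g I A)
    (hi : ∃ j, (g j).natDegree ≤ i) (hgap : ∀ j, (g j).natDegree ≠ i + 1)
    (hdeg : (A i).degree = i) : (A (i + 1) - X * A i).degree < (X * A i).degree := by
  rw [degree_X_mul_of_degree_eq hdeg]
  exact hA.degree_sub_lt i hi hgap

theorem degree_eq (hg : IsMinimalGB g I) (hA : IsWeakDetachingSeq g I A)
    (hi : ∃ j, (g j).natDegree ≤ i) : (A i).degree = i := by
  refine hA.induction_on (motive := fun i a => a.degree = i)
    (fun j => degree_eq_natDegree (hg.ne_zero j)) (fun i hi hgap ih => ?_) hi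
  rw [← sub_add_cancel (A (i + 1)) (X * A i),
    degree_add_eq_right_of_degree_lt (hA.degree_sub_lt_degree_X_mul hi hgap ih),
    degree_X_mul_of_degree_eq ih]

theorem natDegree_eq (hg : IsMinimalGB g I) (hA : IsWeakDetachingSeq g I A)
    (hi : ∃ j, (g j).natDegree ≤ i) : (A i).natDegree = i :=
  natDegree_eq_of_degree_eq_some (hA.degree_eq hg hi)

theorem ne_zero (hg : IsMinimalGB g I) (hA : IsWeakDetachingSeq g I A)
    (hi : ∃ j, (g j).natDegree ≤ i) : A i ≠ 0 :=
  degree_ne_bot.1 (hA.degree_eq hg hi ▸ WithBot.natCast_ne_bot i)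

theorem leadingCoeff_succ (hg : IsMinimalGB g I) (hA : IsWeakDetachingSeq g I A)
    (hi : ∃ j, (g j).natDegree ≤ i) (hgap : ∀ j, (g j).natDegree ≠ i + 1) :
    (A (i + 1)).leadingCoeff = (A i).leadingCoeff := by
  rw [← sub_add_cancel (A (i + 1)) (X * A i),
    leadingCoeff_add_of_degree_lt
      (hA.degree_sub_lt_degree_X_mul hi hgap (hA.degree_eq hg hi)), X_mul, leadingCoeff_mul_X]

theorem natDegree_leadingCoeff_le (hg : IsMinimalGB g I) (hA : IsWeakDetachingSeq g I A) {j : ι}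
    (hj : (g j).natDegree ≤ i) :
    (A i).leadingCoeff.natDegree ≤ (g j).leadingCoeff.natDegree := by
  refine hA.induction_on
    (motive := fun i a => ∀ j, (g j).natDegree ≤ i →
      a.leadingCoeff.natDegree ≤ (g j).leadingCoeff.natDegree)
    (fun l j hj => hg.natDegree_leadingCoeff_le hj) (fun i hi hgap ih j hj => ?_) ⟨j, hj⟩ j hj
  rw [hA.leadingCoeff_succ hg hi hgap]
  exact ih j (Nat.le_of_lt_succ (hj.lt_of_ne (hgap j)))

theorem natDegree_leadingCoeff_le_of_mem (hg : IsMinimalGB g I) (hA : IsWeakDetachingSeq g I A)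
    {f : Biv k} (hf : f ∈ I) (hf0 : f ≠ 0) (hfi : f.natDegree ≤ i) :
    (A i).leadingCoeff.natDegree ≤ f.leadingCoeff.natDegree := by
  obtain ⟨j, hdeg, hlead⟩ := hg.exists_monDvd f hf hf0
  exact (hA.natDegree_leadingCoeff_le hg (hdeg.trans hfi)).trans hlead

end

variable {K ι : Type*} [Field K] {g : ι → Biv K} {I : Ideal (Biv K)} {A : ℕ → Biv K}

theorem span_leadingCoeff_eq_leadingCoeffNth (hg : IsMinimalGB g I)
    (hA : IsWeakDetachingSeq g I A) {i : ℕ} (hi : ∃ j, (g j).natDegree ≤ i) :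
    Ideal.span {(A i).leadingCoeff} = I.leadingCoeffNth i := by
  have hmem : (A i).leadingCoeff ∈ I.leadingCoeffNth i :=
    (I.mem_leadingCoeffNth i _).2 ⟨A i, hA.mem hg hi, (hA.degree_eq hg hi).le, rfl⟩
  refine span_singleton_eq_of_natDegree_le hmem (leadingCoeff_ne_zero.2 (hA.ne_zero hg hi))
    fun p hp hp0 => ?_
  obtain ⟨f, hf, hfi, rfl⟩ := (I.mem_leadingCoeffNth i p).1 hp
  exact hA.natDegree_leadingCoeff_le_of_mem hg hf (leadingCoeff_ne_zero.1 hp0)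
    (natDegree_le_of_degree_le hfi)

theorem leadingCoeff_dvd (hg : IsMinimalGB g I) (hA : IsWeakDetachingSeq g I A)
    {f : Biv K} (hf : f ∈ I) (hf0 : f ≠ 0) :
    (A f.natDegree).leadingCoeff ∣ f.leadingCoeff := by
  rw [← Ideal.mem_span_singleton,
    hA.span_leadingCoeff_eq_leadingCoeffNth hg (hg.exists_natDegree_le hf hf0)]
  exact (I.mem_leadingCoeffNth _ _).2 ⟨f, hf, degree_le_natDegree, rfl⟩

end IsWeakDetachingSeq

namespace IsReducedGB

variable {s : ℕ} {g : Fin (s + 1) → Biv k} {I : Ideal (Biv k)}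

theorem isMinimalGB (hg : IsReducedGB g I) : IsMinimalGB g I where
  ne_zero j := (hg.1.1 (g j) (List.mem_ofFn.2 ⟨j, rfl⟩)).1
  mem j := (hg.1.1 (g j) (List.mem_ofFn.2 ⟨j, rfl⟩)).2
  exists_monDvd f hf hf0 := by
    obtain ⟨_, hmem, hdvd⟩ := hg.1.2 f hf hf0
    obtain ⟨j, rfl⟩ := List.mem_ofFn.1 hmem
    exact ⟨j, hdvd⟩
  not_monDvd j l hjl := by
    have hg0 : g j ≠ 0 := (hg.1.1 (g j) (List.mem_ofFn.2 ⟨j, rfl⟩)).1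
    have hoccurs : occursIn (g j) (lmon (g j)) :=
      leadingCoeff_ne_zero.2 (leadingCoeff_ne_zero.2 hg0)
    exact hg.2.2.1 j l hjl _ hoccurs

theorem isLeast_natDegree_last (hg : IsReducedGB g I) :
    IsLeast (Set.range fun j => (g j).natDegree) (g (Fin.last s)).natDegree := by
  refine ⟨⟨Fin.last s, rfl⟩, Set.forall_mem_range.2 fun j => ?_⟩
  rcases (Fin.le_last j).eq_or_lt with rfl | hj
  · exact le_rfl
  · exact (hg.2.2.2 j _ hj).elim le_of_lt fun h => h.1.le

end IsReducedGB

theorem IsDetachingSeq.isWeakDetachingSeq {s : ℕ} {g : Fin (s + 1) → Biv k} {I : Ideal (Biv k)}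
    {A : ℕ → Biv k} (hg : IsReducedGB g I) (hA : IsDetachingSeq g I A) :
    IsWeakDetachingSeq g I A := by
  have last_le {i : ℕ} : (∃ j, (g j).natDegree ≤ i) → (g (Fin.last s)).natDegree ≤ i + 1 :=
    fun ⟨j, hj⟩ => (hg.isLeast_natDegree_last.2 ⟨j, rfl⟩).trans (Nat.le_succ_of_le hj)
  exact
    { apply_natDegree := hA.2.1
      sub_mem := fun i hi hgap => (hA.2.2 (i + 1) (last_le hi) hgap).1
      degree_sub_lt := fun i hi hgap => (hA.2.2 (i + 1) (last_le hi) hgap).2.1 }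

theorem detaching_basis_free_general {K ι : Type*} [Field K] {I : Ideal (Biv K)} {g : ι → Biv K}
    (hg : IsMinimalGB g I) {A : ℕ → Biv K} (hA : IsWeakDetachingSeq g I A) {d : ℕ}
    (hd : IsLeast (Set.range fun j => (g j).natDegree) d) {n : ℕ} (hn : d ≤ n) :
    ∃ b : Module.Basis (Fin (n - d + 1)) K[X] (ydegLE I n), ∀ j, (b j : Biv K) = A (d + j) := by
  obtain ⟨⟨j₀, hj₀⟩, hd_le⟩ := hd
  have exists_le (i : ℕ) : ∃ j, (g j).natDegree ≤ d + i :=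
    ⟨j₀, hj₀.le.trans (Nat.le_add_right d i)⟩
  have hdeg (i : ℕ) : (A (d + i)).natDegree = d + i := hA.natDegree_eq hg (exists_le i)
  refine exists_basis_of_leadingCoeff_dvd (v := fun j : Fin (n - d + 1) => A (d + j))
    (fun j => ⟨hA.mem hg (exists_le j), by rw [hdeg]; omega⟩)
    (fun j => hA.ne_zero hg (exists_le j)) (fun j l hjl => ?_) ?_
  · simp only [hdeg] at hjl
    omega
  · rintro f ⟨hf, hfn⟩ hf0
    obtain ⟨j, hj⟩ := hg.exists_natDegree_le hf hf0
    have hdf : d ≤ f.natDegree := (hd_le ⟨j, rfl⟩).trans hj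
    refine ⟨⟨f.natDegree - d, by omega⟩, ?_, ?_⟩
    · rw [hdeg, Nat.add_sub_cancel' hdf]
    · simpa only [Nat.add_sub_cancel' hdf] using hA.leadingCoeff_dvd hg hf hf0

/-- For a nonzero ideal `I` of `K[x,y]` with reduced minimal lexicographic
Gröbner basis `g = (g_0, …, g_s)` (for `x ≺ y`) and associated detaching sequence `A`,
for every `n ≥ n_s` the `K[x]`-module `I_{≤(.,n)}` is free of rank `n - n_s + 1`,
with basis `A_{n_s}, …, A_n`. -/
theorem detaching_basis_free {K : Type*} [Field K] {s : ℕ}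
    (I : Ideal (Biv K)) (hI : I ≠ ⊥)
    (g : Fin (s + 1) → Biv K) (hg : IsReducedGB g I)
    (A : ℕ → Biv K) (hA : IsDetachingSeq g I A)
    (n : ℕ) (hn : (g (Fin.last s)).natDegree ≤ n) :
    ∃ b : Module.Basis (Fin (n - (g (Fin.last s)).natDegree + 1)) (Polynomial K) (ydegLE I n),
      ∀ j, (b j : Biv K) = A ((g (Fin.last s)).natDegree + (j : ℕ)) :=
  detaching_basis_free_general hg.isMinimalGB (hA.isWeakDetachingSeq hg)
    hg.isLeast_natDegree_last hn
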